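/- arXiv:2305.01678 — 2 statements merged into one kernel-verified Lean document; each statement's English description precedes it below -/
import Mathlib

section
/- Let A be a commutative ring in which 2 = 0, and let Q₀, Q₁ : A → A be additive derivations (Qᵢ(xy) = Qᵢ(x)y + x Qᵢ(y) for all x, y and i = 0, 1) satisfying Q₀ ∘ Q₀ = 0, Q₁ ∘ Q₁ = 0, and Q₀ ∘ Q₁ = Q₁ ∘ Q₀ as maps A → A. Suppose a, g ∈ A satisfy Q₀(a) = a², Q₁(a) = a⁴, Q₀(g) = 0, and Q₁(g) = g². Define q₀, q₁ : A → A by q₀(x) = ax + Q₀(x) and q₁(x) = (g + a³)x + Q₁(x). Then q₀ ∘ q₀ = 0, q₁ ∘ q₁ = 0, and q₀ ∘ q₁ = q₁ ∘ q₀. -/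
/-- **Twisted `E(1)`-module structure (the case `R = ku`).** Let `A` be a commutative ring
with `2 = 0`, and let `Q₀, Q₁ : A → A` be additive derivations with `Q₀² = 0`, `Q₁² = 0`,
and `Q₀Q₁ = Q₁Q₀`. Suppose `a, g ∈ A` satisfy `Q₀a = a²`, `Q₁a = a⁴`, `Q₀g = 0`, `Q₁g = g²`.
Then the twisted operations `q₀(x) = ax + Q₀x` and `q₁(x) = (g + a³)x + Q₁x` satisfy
`q₀² = 0`, `q₁² = 0`, and `q₀q₁ = q₁q₀`. -/
theorem twisted_E1_module (A : Type) [CommRing A] (h2 : (2 : A) = 0)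
    (Q0 Q1 : A → A)
    (hQ0add : ∀ x y : A, Q0 (x + y) = Q0 x + Q0 y)
    (hQ1add : ∀ x y : A, Q1 (x + y) = Q1 x + Q1 y)
    (hQ0mul : ∀ x y : A, Q0 (x * y) = Q0 x * y + x * Q0 y)
    (hQ1mul : ∀ x y : A, Q1 (x * y) = Q1 x * y + x * Q1 y)
    (hQ0Q0 : ∀ x : A, Q0 (Q0 x) = 0)
    (hQ1Q1 : ∀ x : A, Q1 (Q1 x) = 0)
    (hQ0Q1 : ∀ x : A, Q0 (Q1 x) = Q1 (Q0 x))
    (a g : A)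
    (ha0 : Q0 a = a ^ 2) (ha1 : Q1 a = a ^ 4)
    (hg0 : Q0 g = 0) (hg1 : Q1 g = g ^ 2)
    (q0 q1 : A → A)
    (hq0 : ∀ x : A, q0 x = a * x + Q0 x)
    (hq1 : ∀ x : A, q1 x = (g + a ^ 3) * x + Q1 x) :
    (∀ x : A, q0 (q0 x) = 0) ∧
    (∀ x : A, q1 (q1 x) = 0) ∧
    (∀ x : A, q0 (q1 x) = q1 (q0 x)) := by
  have e0 : Q0 (a ^ 3) = 3 * a ^ 4 := by
    rw [show a ^ 3 = a * (a * a) by ring, hQ0mul, hQ0mul, ha0]; ring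
  have e1 : Q1 (a ^ 3) = 3 * a ^ 6 := by
    rw [show a ^ 3 = a * (a * a) by ring, hQ1mul, hQ1mul, ha1]; ring
  refine ⟨fun x => ?_, fun x => ?_, fun x => ?_⟩
  · rw [hq0, hq0, hQ0add, hQ0mul, hQ0Q0, ha0]
    linear_combination (a ^ 2 * x + a * Q0 x) * h2
  · rw [hq1, hq1, hQ1add, hQ1mul, hQ1Q1, hQ1add, e1, hg1]
    linear_combination ((g ^ 2 + g * a ^ 3 + 2 * a ^ 6) * x + (g + a ^ 3) * Q1 x) * h2
  · rw [hq0, hq1, hq1, hq0, hQ0add, hQ0mul, hQ0add, e0, hg0, hQ1add, hQ1mul, ha1, hQ0Q1]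
    linear_combination (a ^ 4 * x) * h2
end

section
/- Let A be a commutative ring in which 2 = 0, and let Sq¹, Sq² : A → A be additive maps such that Sq¹ is a derivation (Sq¹(xy) = Sq¹(x)y + x Sq¹(y)), Sq² satisfies the Cartan formula Sq²(xy) = Sq²(x)y + Sq¹(x)Sq¹(y) + x Sq²(y), and, as operators on A, Sq¹ ∘ Sq¹ = 0 and Sq² ∘ Sq² = Sq¹ ∘ Sq² ∘ Sq¹. Suppose a, b ∈ A satisfy Sq¹(a) = a², Sq²(a) = 0, and Sq²(b) = b². Define s₁, s₂ : A → A by s₁(x) = ax + Sq¹(x) and s₂(x) = bx + a Sq¹(x) + Sq²(x). Then s₁ ∘ s₁ = 0 and s₂ ∘ s₂ = s₁ ∘ s₂ ∘ s₁. -/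
/-- **Twisted `A(1)`-module structure (the case `R = ko`).** Let `A` be a commutative ring
with `2 = 0`, and let `Sq¹, Sq² : A → A` be additive maps with `Sq¹` a derivation, `Sq²`
satisfying the Cartan formula, `Sq¹Sq¹ = 0`, and `Sq²Sq² = Sq¹Sq²Sq¹`. Suppose `a, b ∈ A`
satisfy `Sq¹a = a²`, `Sq²a = 0`, `Sq²b = b²`. Then the twisted operations
`s₁(x) = ax + Sq¹x` and `s₂(x) = bx + aSq¹x + Sq²x` satisfy `s₁s₁ = 0` and
`s₂s₂ = s₁s₂s₁`. -/
theorem twisted_A1_module (A : Type) [CommRing A] (h2 : (2 : A) = 0)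
    (Sq1 Sq2 : A → A)
    (hSq1add : ∀ x y : A, Sq1 (x + y) = Sq1 x + Sq1 y)
    (hSq2add : ∀ x y : A, Sq2 (x + y) = Sq2 x + Sq2 y)
    (hSq1mul : ∀ x y : A, Sq1 (x * y) = Sq1 x * y + x * Sq1 y)
    (hSq2mul : ∀ x y : A, Sq2 (x * y) = Sq2 x * y + Sq1 x * Sq1 y + x * Sq2 y)
    (hSq1Sq1 : ∀ x : A, Sq1 (Sq1 x) = 0)
    (hSq2Sq2 : ∀ x : A, Sq2 (Sq2 x) = Sq1 (Sq2 (Sq1 x)))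
    (a b : A)
    (ha1 : Sq1 a = a ^ 2) (ha2 : Sq2 a = 0) (hb2 : Sq2 b = b ^ 2)
    (s1 s2 : A → A)
    (hs1 : ∀ x : A, s1 x = a * x + Sq1 x)
    (hs2 : ∀ x : A, s2 x = b * x + a * Sq1 x + Sq2 x) :
    (∀ x : A, s1 (s1 x) = 0) ∧
    (∀ x : A, s2 (s2 x) = s1 (s2 (s1 x))) := by
  have h0 : Sq1 0 = 0 := by simpa using hSq1add 0 0
  constructor
  · intro x
    simp only [hs1, hSq1add, hSq1mul, hSq1Sq1, ha1]
    linear_combination (a ^ 2 * x + a * Sq1 x) * h2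
  · intro x
    simp only [hs1, hs2, hSq1add, hSq2add, hSq1mul, hSq2mul, hSq1Sq1, hSq2Sq2, ha1, ha2, hb2,
      pow_two, h0, mul_zero, zero_mul, add_zero, zero_add]
    grind
end
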